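/- Let (A, α, γ) be a graded C*-dynamical system, β ∈ ℝ, ω a γ-invariant (α, β)-KMS state with enveloping graded von Neumann algebra (M, Ω, V), where M = π(A)'' for the GNS representation (H, π, Ω). Suppose A contains a sequence (u_n) of selfadjoint unitaries invariant under the dynamics and the grading such that ω(u_n u_m) → 1 as n, m → ∞ and ‖u_n a u_n − γ(a)‖ → 0 for all a in a norm-dense α-invariant *-subalgebra A₀ of entire analytic elements. Then ρ(a) := lim_{n→∞} ω(a u_n) exists for all a ∈ A and defines a hermitian γ-twisted (α, β)-KMS functional dominated by ω, and the family of all hermitian γ-twisted (α, β)-KMS functionals dominated by ω is exactly {a ↦ ρ(a z) : z = z* ∈ Z(M), ‖z‖ ≤ 1}. -/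

import Mathlib

open scoped InnerProductSpace ComplexOrder

noncomputable section

/-- A strongly continuous one-parameter group of *-automorphisms of a unital C*-algebra. -/
structure Dynamics (A : Type*) [CStarAlgebra A] where
  α : ℝ → A ≃⋆ₐ[ℂ] A
  α_zero : ∀ a, α 0 a = a
  α_add : ∀ s t a, α (s + t) a = α s (α t a)
  α_cont : ∀ a, Continuous fun t => α t a

variable {A : Type*} [CStarAlgebra A]

/-- `f` is the entire analytic extension of `t ↦ α_t a`; an element admitting such an
extension is an entire analytic element for the dynamics. -/
def Dynamics.IsAnalyticExt (d : Dynamics A) (a : A) (f : ℂ → A) : Prop :=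
  Differentiable ℂ f ∧ ∀ t : ℝ, f (t : ℂ) = d.α t a

/-- A state: positive normalized linear functional. -/
def IsState (ω : A → ℂ) : Prop :=
  IsLinearMap ℂ ω ∧ (∀ a : A, 0 ≤ ω (star a * a)) ∧ ω 1 = 1

/-- The `(α, β)`-KMS condition: `ω (a * α_{iβ}(b)) = ω (b * a)` for entire analytic `a, b`. -/
def Dynamics.IsKMS (d : Dynamics A) (β : ℝ) (ω : A → ℂ) : Prop :=
  IsState ω ∧ ∀ a b : A, ∀ fa fb : ℂ → A, d.IsAnalyticExt a fa → d.IsAnalyticExt b fb →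
    ω (a * fb (Complex.I * β)) = ω (b * a)

/-- A graded C*-dynamical system: dynamics plus a commuting involutive grading. -/
structure GradedDyn (A : Type*) [CStarAlgebra A] extends Dynamics A where
  γ : A ≃⋆ₐ[ℂ] A
  γ_invol : ∀ a, γ (γ a) = a
  γ_comm : ∀ t a, γ (α t a) = α t (γ a)

/-- The `γ`-twisted `(α, β)`-KMS condition: `ρ (a * α_{iβ}(b)) = ρ (b * γ a)`. -/
def Dynamics.IsTwistedKMS (d : Dynamics A) (γ : A ≃⋆ₐ[ℂ] A) (β : ℝ) (ρ : A → ℂ) : Prop :=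
  IsLinearMap ℂ ρ ∧ ∀ a b : A, ∀ fa fb : ℂ → A, d.IsAnalyticExt a fa → d.IsAnalyticExt b fb →
    ρ (a * fb (Complex.I * β)) = ρ (b * γ a)

/-- Hermitian functional: `ρ(a*) = conj (ρ a)`. -/
def IsHermitian (ρ : A → ℂ) : Prop := ∀ a, ρ (star a) = starRingEnd ℂ (ρ a)

/-- `ρ` is dominated by `ω`: `|ρ(a* b)|² ≤ ω(a* a) ω(b* b)`. -/
def Dominated (ω ρ : A → ℂ) : Prop :=
  ∀ a b : A, (‖ρ (star a * b)‖ : ℂ) ^ 2 ≤ ω (star a * a) * ω (star b * b)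

/-- The set `F_β(A, α, γ, ω)`: hermitian `γ`-twisted `(α,β)`-KMS functionals dominated by `ω`. -/
def TwistedKMSDom (d : Dynamics A) (γ : A ≃⋆ₐ[ℂ] A) (β : ℝ) (ω ρ : A → ℂ) : Prop :=
  d.IsTwistedKMS γ β ρ ∧ IsHermitian ρ ∧ Dominated ω ρ

/-- Product of the `ℤ₂`-crossed product `A ⋊_γ ℤ₂` realized on `A ⊕ A`. -/
def cpMul (γ : A ≃⋆ₐ[ℂ] A) (p q : A × A) : A × A :=
  (p.1 * q.1 + p.2 * γ q.2, p.1 * q.2 + p.2 * γ q.1)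

/-- Involution of the crossed product. -/
def cpStar (γ : A ≃⋆ₐ[ℂ] A) (p : A × A) : A × A := (star p.1, γ (star p.2))

/-- Unit of the crossed product. -/
def cpOne : A × A := (1, 0)

/-- A state on the crossed product. -/
def cpIsState (γ : A ≃⋆ₐ[ℂ] A) (W : A × A → ℂ) : Prop :=
  IsLinearMap ℂ W ∧ (∀ p : A × A, 0 ≤ W (cpMul γ (cpStar γ p) p)) ∧ W (cpOne : A × A) = 1

/-- Entire analytic extension for the componentwise extended dynamics `𝛂` on `A ⊕ A`. -/
def cpIsAnalyticExt (d : Dynamics A) (p : A × A) (f : ℂ → A × A) : Prop :=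
  Differentiable ℂ f ∧ ∀ t : ℝ, f (t : ℂ) = (d.α t p.1, d.α t p.2)

/-- `(𝛂, β)`-KMS states of the crossed product `A ⋊_γ ℤ₂`. -/
def cpIsKMS (d : Dynamics A) (γ : A ≃⋆ₐ[ℂ] A) (β : ℝ) (W : A × A → ℂ) : Prop :=
  cpIsState γ W ∧ ∀ p q : A × A, ∀ fp fq : ℂ → A × A,
    cpIsAnalyticExt d p fp → cpIsAnalyticExt d q fq →
    W (cpMul γ p (fq (Complex.I * β))) = W (cpMul γ q p)


/-- The enveloping von Neumann algebra `M = π(A)''` of a representation `π`. -/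
def envVN {A : Type*} [CStarAlgebra A]
    {Hs : Type*} [NormedAddCommGroup Hs] [InnerProductSpace ℂ Hs] [CompleteSpace Hs]
    (π : A →⋆ₐ[ℂ] (Hs →L[ℂ] Hs)) : Set (Hs →L[ℂ] Hs) :=
  Set.centralizer (Set.centralizer (Set.range fun a => π a))

/-- The center `Z(π(A)'')`. -/
def envCenter {A : Type*} [CStarAlgebra A]
    {Hs : Type*} [NormedAddCommGroup Hs] [InnerProductSpace ℂ Hs] [CompleteSpace Hs]
    (π : A →⋆ₐ[ℂ] (Hs →L[ℂ] Hs)) : Set (Hs →L[ℂ] Hs) :=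
  envVN π ∩ Set.centralizer (envVN π)

/-!
Write `φ` for the vector state of `Ω` on `M = π(A)''`.

*Centrality.* By the KMS condition, right multiplication by an entire analytic element `b` on
`π(A)Ω` has `α_{iβ}(b*)` as its adjoint. Iterating the Cauchy-Schwarz inequality on powers of `b`
shows that it is bounded, hence given by an operator of the commutant `M'`. Let `z ∈ M'` be such
that `a ↦ ⟪Ω, π a (z Ω)⟫` is hermitian and KMS. This functional and `φ` are `α`-invariant by
Liouville's theorem when `β ≠ 0`, hence so is the projection of `z Ω` to the closed real span of
the vectors `π h Ω`, `h = h*`. The projection is then hermitian, the orthogonal remainder is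
antihermitian and hermitian, and so `z Ω` lies in that real span. The relation
`⟪η, T Ω⟫ = ⟪Ω, T η⟫` for `T ∈ M'` and `η` in the span, applied with `η = z Ω`, shows that `z`
commutes with `M'`, so it is central in `M`.

*Untwisting.* Since `‖u_n Ω - u_m Ω‖² = 2 - 2 Re φ(u_n u_m)`, the `π(u_n)` converge strongly to a
symmetry `R ∈ M` that implements `γ` and commutes with `M` under `φ`. A twisted functional
dominated by `φ` has the form `a ↦ ⟪Ω, π a τ⟫` with `R τ = z Ω`, `z ∈ M'`, `‖z‖ ≤ 1`, and passing
from `τ` to `R τ` turns the twisted KMS condition into the ordinary one. So `z` is central and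
`τ = z R Ω`.
-/

section EntireFunctions

open Filter Topology

variable {E : Type*} [NormedAddCommGroup E] [NormedSpace ℂ E]

theorem eq_of_differentiable_of_eq_ofReal [CompleteSpace E] {f g : ℂ → E}
    (hf : Differentiable ℂ f) (hg : Differentiable ℂ g) (hfg : ∀ t : ℝ, f t = g t) : f = g := by
  refine AnalyticOnNhd.eq_of_frequently_eq (z₀ := ((0 : ℝ) : ℂ))
    (fun z _ => hf.analyticAt z) (fun z _ => hg.analyticAt z) ?_
  have tendsto_ofReal : Tendsto ((↑) : ℝ → ℂ) (𝓝[≠] 0) (𝓝[≠] ((0 : ℝ) : ℂ)) :=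
    Complex.continuous_ofReal.continuousWithinAt.tendsto_nhdsWithin
      fun _ ht => Complex.ofReal_injective.ne ht
  exact tendsto_ofReal.frequently (Frequently.of_forall hfg)

theorem exists_int_abs_im_add_le {β : ℝ} (hβ : β ≠ 0) (z : ℂ) :
    ∃ n : ℤ, |(z + n * (Complex.I * β)).im| ≤ |β| := by
  have im_eq : (z + (-⌊z.im / β⌋ : ℤ) * (Complex.I * β)).im = Int.fract (z.im / β) * β := by
    rw [Int.fract, sub_mul, div_mul_cancel₀ _ hβ]
    simp [sub_eq_add_neg]
  refine ⟨-⌊z.im / β⌋, ?_⟩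
  rw [im_eq, abs_mul, abs_of_nonneg (Int.fract_nonneg _)]
  exact mul_le_of_le_one_left (abs_nonneg _) (Int.fract_lt_one _).le

theorem apply_eq_apply_of_periodic_of_bounded_strip {F : ℂ → E} (hF : Differentiable ℂ F)
    {β : ℝ} (hβ : β ≠ 0) (hper : Function.Periodic F (Complex.I * β)) {C : ℝ}
    (hC : ∀ z : ℂ, |z.im| ≤ |β| → ‖F z‖ ≤ C) (z w : ℂ) : F z = F w := by
  refine hF.apply_eq_apply_of_bounded (isBounded_iff_forall_norm_le.2 ⟨C, ?_⟩) z w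
  rintro _ ⟨x, rfl⟩
  obtain ⟨n, hn⟩ := exists_int_abs_im_add_le hβ x
  rw [← hper.int_mul n x]
  exact hC _ hn

end EntireFunctions

section PowerTrick

open Filter Topology

variable {x : ℕ → ℝ}

theorem div_pow_two_pow_le (hx : ∀ k, 0 ≤ x k) (hx₀ : 0 < x 0)
    (hsq : ∀ k, x k ^ 2 ≤ x 0 * x (2 * k)) (n : ℕ) :
    (x 1 / x 0) ^ 2 ^ n ≤ x (2 ^ n) / x 0 := by
  induction n with
  | zero => simp
  | succ n ih =>
    calc (x 1 / x 0) ^ 2 ^ (n + 1) = ((x 1 / x 0) ^ 2 ^ n) ^ 2 := by rw [pow_succ, pow_mul]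
      _ ≤ (x (2 ^ n) / x 0) ^ 2 := by
        gcongr
        exact pow_nonneg (div_nonneg (hx 1) hx₀.le) _
      _ ≤ x (2 ^ (n + 1)) / x 0 := by
        rw [div_pow, div_le_div_iff₀ (by positivity) hx₀, pow_succ' 2 n]
        nlinarith [hsq (2 ^ n)]

theorem apply_one_le_mul_apply_zero_of_sq_le {C s : ℝ} (hs : 0 ≤ s) (hx : ∀ k, 0 ≤ x k)
    (hsq : ∀ k, x k ^ 2 ≤ x 0 * x (2 * k)) (hle : ∀ k, x k ≤ C * s ^ k) :
    x 1 ≤ s * x 0 := by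
  rcases (hx 0).eq_or_lt with hx₀ | hx₀
  · have : x 1 ^ 2 ≤ 0 := by simpa [← hx₀] using hsq 1
    simp [← hx₀, pow_eq_zero_iff two_ne_zero |>.1 (this.antisymm (sq_nonneg _))]
  rw [← div_le_iff₀ hx₀]
  by_contra! hlt
  set r := x 1 / x 0
  have hr : 0 < r := hs.trans_lt hlt
  have ratio_tendsto : Tendsto (fun n : ℕ => C / x 0 * (s / r) ^ 2 ^ n) atTop (𝓝 (C / x 0 * 0)) :=
    ((tendsto_pow_atTop_nhds_zero_of_lt_one (by positivity) ((div_lt_one hr).2 hlt)).comp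
      (tendsto_pow_atTop_atTop_of_one_lt one_lt_two)).const_mul _
  have one_le_ratio (n : ℕ) : 1 ≤ C / x 0 * (s / r) ^ 2 ^ n := by
    rw [div_pow, ← mul_div_assoc, le_div_iff₀ (by positivity), one_mul, div_mul_eq_mul_div]
    exact (div_pow_two_pow_le hx hx₀ hsq n).trans (by gcongr; exact hle _)
  have : (1 : ℝ) ≤ C / x 0 * 0 := ge_of_tendsto' ratio_tendsto one_le_ratio
  norm_num at this

end PowerTrick

section InnerProduct

variable {𝕜 E : Type*} [RCLike 𝕜] [NormedAddCommGroup E] [InnerProductSpace 𝕜 E]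

theorem isFixedPt_starProjection {K : Submodule 𝕜 E} [K.HasOrthogonalProjection] {V : E → E}
    (hV : Isometry V) (hK : Set.MapsTo V K K) {x : E} (hx : Function.IsFixedPt V x) :
    Function.IsFixedPt V (K.starProjection x) := by
  set q := K.starProjection x
  have hq : q ∈ K := K.starProjection_apply_mem x
  have inner_eq_zero : inner 𝕜 (x - q) (q - V q) = 0 :=
    (K.mem_orthogonal' _).1 (K.sub_starProjection_mem_orthogonal x) _ (K.sub_mem hq (hK hq))
  have pythagoras : ‖x - V q‖ * ‖x - V q‖ = ‖x - q‖ * ‖x - q‖ + ‖q - V q‖ * ‖q - V q‖ := by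
    rw [← norm_add_sq_eq_norm_sq_add_norm_sq_of_inner_eq_zero _ _ inner_eq_zero, sub_add_sub_cancel]
  have norm_eq : ‖x - V q‖ = ‖x - q‖ := by
    rw [← dist_eq_norm, ← dist_eq_norm, ← hV.dist_eq x q, hx.eq]
  rw [norm_eq, left_eq_add, mul_self_eq_zero, norm_sub_eq_zero_iff] at pythagoras
  exact pythagoras.symm

theorem norm_le_of_denseRange_inner_le {ι : Type*} {f : ι → E} (hf : DenseRange f) {x : E}
    {C : ℝ} (hC : 0 ≤ C) (h : ∀ i, ‖inner 𝕜 (f i) x‖ ≤ ‖f i‖ * C) : ‖x‖ ≤ C := by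
  have inner_le : ‖inner 𝕜 x x‖ ≤ ‖x‖ * C :=
    hf.induction_on (p := fun y => ‖inner 𝕜 y x‖ ≤ ‖y‖ * C) x
      (isClosed_le (by fun_prop) (by fun_prop)) h
  rcases (norm_nonneg x).eq_or_lt with hx | hx
  · exact hx ▸ hC
  · rw [inner_self_eq_norm_sq_to_K, norm_pow, RCLike.norm_ofReal, abs_norm, sq] at inner_le
    exact le_of_mul_le_mul_left inner_le hx

end InnerProduct

section AnalyticElements

theorem isometry_starAlgEquiv (e : A ≃⋆ₐ[ℂ] A) : Isometry e :=
  AddMonoidHomClass.isometry_of_norm e (StarAlgEquiv.norm_map e)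

theorem differentiable_starAlgEquiv (e : A ≃⋆ₐ[ℂ] A) : Differentiable ℂ e :=
  (⟨e.toAlgEquiv.toLinearMap, (isometry_starAlgEquiv e).continuous⟩ : A →L[ℂ] A).differentiable

variable {d : Dynamics A} {a b : A} {f : ℂ → A} {β : ℝ}

namespace Dynamics

/-- The entire analytic elements of a dynamics. -/
def analyticElements (d : Dynamics A) : Set A := {a | ∃ f, d.IsAnalyticExt a f}

theorem isAnalyticExt_const (ha : ∀ t, d.α t a = a) : d.IsAnalyticExt a fun _ => a :=
  ⟨differentiable_const a, fun t => (ha t).symm⟩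

namespace IsAnalyticExt

theorem apply_zero (hf : d.IsAnalyticExt a f) : f 0 = a := by
  simpa [d.α_zero] using hf.2 0

theorem apply_add_ofReal (hf : d.IsAnalyticExt a f) (w : ℂ) (t : ℝ) :
    f (w + t) = d.α t (f w) := by
  have eq_on_complex : (fun z => f (z + t)) = fun z => d.α t (f z) := by
    refine eq_of_differentiable_of_eq_ofReal (hf.1.comp (by fun_prop))
      ((differentiable_starAlgEquiv (d.α t)).comp hf.1) fun s => ?_
    rw [hf.2, ← d.α_add, add_comm t s, ← hf.2, Complex.ofReal_add]
  exact congrFun eq_on_complex w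

theorem shift (hf : d.IsAnalyticExt a f) (w : ℂ) :
    d.IsAnalyticExt (f w) fun z => f (w + z) :=
  ⟨hf.1.comp (by fun_prop), hf.apply_add_ofReal w⟩

theorem norm_apply (hf : d.IsAnalyticExt a f) (z : ℂ) : ‖f z‖ = ‖f (Complex.I * z.im)‖ := by
  conv_lhs => rw [← Complex.re_add_im z, add_comm, mul_comm _ Complex.I, hf.apply_add_ofReal]
  exact StarAlgEquiv.norm_map _ _

variable {E : Type*} [NormedAddCommGroup E] [NormedSpace ℂ E]

theorem apply_eq_of_invariant [CompleteSpace E] (hf : d.IsAnalyticExt a f) {L : A →L[ℂ] E}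
    (hL : ∀ t, L (d.α t a) = L a) (z : ℂ) : L (f z) = L a := by
  have eq_const : (fun z => L (f z)) = fun _ => L a :=
    eq_of_differentiable_of_eq_ofReal (L.differentiable.comp hf.1) (differentiable_const _)
      fun t => by rw [hf.2, hL]
  exact congrFun eq_const z

theorem exists_norm_le_of_abs_im_le (hf : d.IsAnalyticExt a f) (r : ℝ) :
    ∃ C, ∀ z : ℂ, |z.im| ≤ r → ‖f z‖ ≤ C := by
  have continuous_norm : Continuous fun y : ℝ => ‖f (Complex.I * y)‖ := by
    have := hf.1.continuous
    fun_prop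
  obtain ⟨C, hC⟩ := (isCompact_Icc (a := -r) (b := r)).bddAbove_image continuous_norm.continuousOn
  exact ⟨C, fun z hz => hf.norm_apply z ▸ hC ⟨z.im, abs_le.1 hz, rfl⟩⟩

/-- Periodicity in the direction `iβ` bounds the entire function `z ↦ L (α_z a)`, so that
Liouville's theorem applies. -/
theorem apply_α_of_periodic (hf : d.IsAnalyticExt a f) (hβ : β ≠ 0) {L : A →L[ℂ] E}
    (hL : ∀ b g, d.IsAnalyticExt b g → L (g (Complex.I * β)) = L b) (t : ℝ) :
    L (d.α t a) = L a := by
  obtain ⟨C, hC⟩ := hf.exists_norm_le_of_abs_im_le |β|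
  have apply_eq : L (f t) = L (f 0) :=
    apply_eq_apply_of_periodic_of_bounded_strip (L.differentiable.comp hf.1) hβ
      (fun z => hL _ _ (hf.shift z))
      (fun z hz => (L.le_opNorm _).trans (mul_le_mul_of_nonneg_left (hC z hz) (norm_nonneg L)))
      t 0
  rwa [hf.2, hf.apply_zero] at apply_eq

end IsAnalyticExt

/-- The KMS condition with only the second factor required to be entire analytic. For continuous
functionals it is the usual condition as soon as the analytic elements are dense. -/
def IsKMSFunctional (d : Dynamics A) (β : ℝ) (ψ : A → ℂ) : Prop :=
  ∀ (a : A) {b : A} {f : ℂ → A}, d.IsAnalyticExt b f → ψ (a * f (Complex.I * β)) = ψ (b * a)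

theorem kms_condition_of_dense (hd : Dense d.analyticElements) {ψ : A → ℂ} (hψ : Continuous ψ)
    {σ : A → A} (hσ : Continuous σ)
    (h : ∀ a b fa fb, d.IsAnalyticExt a fa → d.IsAnalyticExt b fb →
      ψ (a * fb (Complex.I * β)) = ψ (b * σ a))
    (a : A) (hf : d.IsAnalyticExt b f) : ψ (a * f (Complex.I * β)) = ψ (b * σ a) := by
  refine congrFun (Continuous.ext_on hd (f := fun a => ψ (a * f (Complex.I * β)))
    (g := fun a => ψ (b * σ a)) (by fun_prop) (by fun_prop) ?_) a
  rintro a ⟨g, hg⟩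
  exact h a b g f hg hf

theorem IsKMSFunctional.apply_α (hd : Dense d.analyticElements) (hβ : β ≠ 0) {L : A →L[ℂ] ℂ}
    (hL : d.IsKMSFunctional β L) (t : ℝ) (a : A) : L (d.α t a) = L a := by
  refine congrFun (Continuous.ext_on hd
    (L.continuous.comp (differentiable_starAlgEquiv (d.α t)).continuous) L.continuous ?_) a
  rintro b ⟨f, hf⟩
  exact hf.apply_α_of_periodic hβ (fun c g hg => by simpa using hL 1 hg) t

end Dynamics

/-- Right multiplication by `c` is adjoint to right multiplication by `b` for the sesquilinear
form `(x, y) ↦ ψ (x* y)`. For a KMS functional `α_{iβ}(b*)` is a modular adjoint of `b`. -/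
def IsModularAdjoint (ψ : A → ℂ) (b c : A) : Prop := ∀ x, ψ (star b * x) = ψ (x * c)

namespace IsModularAdjoint

variable {ψ : A → ℂ} {b' c c' : A}

theorem symm (hψ : IsHermitian ψ) (h : IsModularAdjoint ψ b c) : IsModularAdjoint ψ c b := by
  intro x
  rw [← star_star (star c * x), hψ, star_mul, star_star, ← h, ← hψ, star_mul, star_star, star_star]

theorem mul (h : IsModularAdjoint ψ b c) (h' : IsModularAdjoint ψ b' c') :
    IsModularAdjoint ψ (b * b') (c' * c) := by
  intro x
  rw [star_mul, mul_assoc, h', mul_assoc, h, mul_assoc]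

theorem pow (h : IsModularAdjoint ψ b c) (k : ℕ) : IsModularAdjoint ψ (b ^ k) (c ^ k) := by
  induction k with
  | zero => intro x; simp
  | succ k ih => rw [pow_succ, pow_succ']; exact ih.mul h

end IsModularAdjoint

namespace Dynamics.IsKMSFunctional

variable {ψ : A → ℂ}

theorem isModularAdjoint (hψ : d.IsKMSFunctional β ψ) (hf : d.IsAnalyticExt b f) :
    IsModularAdjoint ψ (star (f (-(Complex.I * β)))) b := by
  intro x
  have kms := hψ x (hf.shift (-(Complex.I * β)))
  rw [neg_add_cancel, hf.apply_zero] at kms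
  rw [star_star, kms]

theorem isModularAdjoint_of_invariant (hψ : d.IsKMSFunctional β ψ) (hb : ∀ t, d.α t b = b) :
    IsModularAdjoint ψ (star b) b :=
  hψ.isModularAdjoint (isAnalyticExt_const hb)

end Dynamics.IsKMSFunctional

end AnalyticElements

section Representation

open Filter Topology

variable {Hs : Type*} [NormedAddCommGroup Hs] [InnerProductSpace ℂ Hs] [CompleteSpace Hs]
  {π : A →⋆ₐ[ℂ] (Hs →L[ℂ] Hs)} {Ω : Hs}

theorem rep_mul_apply (a b : A) (x : Hs) : π (a * b) x = π a (π b x) := by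
  rw [map_mul]; rfl

theorem inner_rep_right (a : A) (x y : Hs) : ⟪x, π a y⟫_ℂ = ⟪π (star a) x, y⟫_ℂ := by
  rw [map_star, ContinuousLinearMap.star_eq_adjoint, ContinuousLinearMap.adjoint_inner_left]

theorem inner_rep_left (a : A) (x y : Hs) : ⟪π a x, y⟫_ℂ = ⟪x, π (star a) y⟫_ℂ := by
  rw [inner_rep_right, star_star]

theorem inner_rep_rep (a b : A) (x y : Hs) : ⟪π a x, π b y⟫_ℂ = ⟪x, π (star a * b) y⟫_ℂ := by
  rw [inner_rep_left, rep_mul_apply]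

theorem norm_rep_apply_le (a : A) (x : Hs) : ‖π a x‖ ≤ ‖a‖ * ‖x‖ :=
  (π a).le_of_opNorm_le (NonUnitalStarAlgHom.norm_apply_le π a) x

/-- The map `a ↦ π a x`; the vector `x` is cyclic when it has dense range. -/
def orbitMap (π : A →⋆ₐ[ℂ] (Hs →L[ℂ] Hs)) (x : Hs) : A →L[ℂ] Hs :=
  LinearMap.mkContinuous
    { toFun := fun a => π a x
      map_add' := fun a b => by rw [map_add, add_apply]
      map_smul' := fun c a => by rw [map_smul, smul_apply, RingHom.id_apply] }
    ‖x‖ fun a => (norm_rep_apply_le a x).trans_eq (mul_comm _ _)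

theorem orbitMap_apply (x : Hs) (a : A) : orbitMap π x a = π a x := rfl

/-- The vector functional `a ↦ ⟪x, π a y⟫`. -/
def vectorFunctional (π : A →⋆ₐ[ℂ] (Hs →L[ℂ] Hs)) (x y : Hs) : A →L[ℂ] ℂ :=
  (innerSL ℂ x).comp (orbitMap π y)

theorem vectorFunctional_apply (x y : Hs) (a : A) : vectorFunctional π x y a = ⟪x, π a y⟫_ℂ := rfl

theorem isHermitian_vectorFunctional_self (x : Hs) : IsHermitian (vectorFunctional π x x) := by
  intro a
  rw [vectorFunctional_apply, vectorFunctional_apply, inner_rep_right, star_star, inner_conj_symm]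

theorem vectorFunctional_self_star_mul_self (x : Hs) (a : A) :
    vectorFunctional π x x (star a * a) = (‖π a x‖ : ℂ) ^ 2 := by
  rw [vectorFunctional_apply, ← inner_rep_rep, inner_self_eq_norm_sq_to_K]
  rfl

theorem eq_of_vectorFunctional_eq (hΩ : DenseRange (orbitMap π Ω)) {x y : Hs}
    (h : ∀ a, vectorFunctional π Ω x a = vectorFunctional π Ω y a) : x = y := by
  refine hΩ.eq_of_inner_right ℂ fun a => ?_
  rw [orbitMap_apply, inner_rep_left, inner_rep_left]
  exact h (star a)

theorem tendsto_rep_apply {ι : Type*} {l : Filter ι} {a : ι → A} {x : ι → Hs} {a₀ : A} {x₀ : Hs}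
    (ha : Tendsto a l (𝓝 a₀)) (hx : Tendsto x l (𝓝 x₀)) :
    Tendsto (fun i => π (a i) (x i)) l (𝓝 (π a₀ x₀)) := by
  have continuous_π : Continuous π :=
    AddMonoidHomClass.continuous_of_bound π 1 fun a => by
      simpa using NonUnitalStarAlgHom.norm_apply_le π a
  exact (isBoundedBilinearMap_apply.continuous.tendsto (π a₀, x₀)).comp
    (((continuous_π.tendsto a₀).comp ha).prodMk_nhds hx)

/-- The commutant `π(A)'`, so that `envVN π` is its centralizer. -/
def commutant (π : A →⋆ₐ[ℂ] (Hs →L[ℂ] Hs)) : Set (Hs →L[ℂ] Hs) :=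
  Set.centralizer (Set.range fun a => π a)

section Commutant

variable {T m : Hs →L[ℂ] Hs}

theorem mem_commutant_iff : T ∈ commutant π ↔ ∀ a x, T (π a x) = π a (T x) := by
  rw [commutant, Set.mem_centralizer_iff, Set.forall_mem_range]
  exact forall_congr' fun a => ContinuousLinearMap.ext_iff.trans (forall_congr' fun _ => eq_comm)

theorem star_mem_commutant (hT : T ∈ commutant π) : star T ∈ commutant π := by
  refine Set.star_mem_centralizer' ?_ hT
  rintro _ ⟨a, rfl⟩
  exact ⟨star a, map_star π a⟩

theorem apply_comm_of_mem_envVN (hm : m ∈ envVN π) (hT : T ∈ commutant π) (x : Hs) :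
    m (T x) = T (m x) :=
  (DFunLike.congr_fun (hm T hT) x).symm

theorem rep_mem_envVN (a : A) : π a ∈ envVN π :=
  Set.subset_centralizer_centralizer ⟨a, rfl⟩

theorem eq_of_mem_commutant (hΩ : DenseRange (orbitMap π Ω)) {S : Hs →L[ℂ] Hs}
    (hS : S ∈ commutant π) (hT : T ∈ commutant π) (h : S Ω = T Ω) : S = T := by
  refine ContinuousLinearMap.coeFn_injective (hΩ.equalizer S.continuous T.continuous ?_)
  funext a
  change S (π a Ω) = T (π a Ω)
  rw [mem_commutant_iff.1 hS, mem_commutant_iff.1 hT, h]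

theorem exists_mem_commutant (hΩ : DenseRange (orbitMap π Ω)) {τ : Hs} {C : ℝ} (hC : 0 ≤ C)
    (hτ : ∀ a, ‖π a τ‖ ≤ C * ‖π a Ω‖) : ∃ T ∈ commutant π, T Ω = τ ∧ ‖T‖ ≤ C := by
  let T := (orbitMap π τ).toLinearMap.extendOfNorm (orbitMap π Ω).toLinearMap
  have T_rep (a : A) : T (π a Ω) = π a τ := LinearMap.extendOfNorm_eq hΩ ⟨C, hτ⟩ a
  refine ⟨T, mem_commutant_iff.2 fun a x => ?_, by simpa using T_rep 1,
    LinearMap.opNorm_extendOfNorm_le hΩ hC hτ⟩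
  refine congrFun (hΩ.equalizer (T.continuous.comp (π a).continuous)
    ((π a).continuous.comp T.continuous) (funext fun b => ?_)) x
  change T (π a (π b Ω)) = π a (T (π b Ω))
  rw [← rep_mul_apply, T_rep, T_rep, rep_mul_apply]

end Commutant

section ModularAdjoint

variable {b c : A}

theorem inner_rep_mul_left (h : IsModularAdjoint (vectorFunctional π Ω Ω) b c) (x y : A) :
    ⟪π (x * b) Ω, π y Ω⟫_ℂ = ⟪π x Ω, π (y * c) Ω⟫_ℂ := by
  rw [inner_rep_rep, inner_rep_rep, star_mul, mul_assoc, ← mul_assoc (star x)]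
  exact h (star x * y)

theorem norm_rep_mul_sq_le (h : IsModularAdjoint (vectorFunctional π Ω Ω) b c) (a : A) :
    ‖π (a * b) Ω‖ ^ 2 ≤ ‖π a Ω‖ * ‖π (a * (b * c)) Ω‖ := by
  calc ‖π (a * b) Ω‖ ^ 2 = ‖⟪π a Ω, π (a * (b * c)) Ω⟫_ℂ‖ := by
        rw [← mul_assoc, ← inner_rep_mul_left h, inner_self_eq_norm_sq_to_K]
        simp
    _ ≤ ‖π a Ω‖ * ‖π (a * (b * c)) Ω‖ := norm_inner_le_norm _ _

theorem norm_rep_mul_le_of_self (h : IsModularAdjoint (vectorFunctional π Ω Ω) b b) (a : A) :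
    ‖π (a * b) Ω‖ ≤ ‖b‖ * ‖π a Ω‖ := by
  have norm_pow_le_pow (k : ℕ) : ‖b ^ k‖ ≤ ‖b‖ ^ k := by
    cases subsingleton_or_nontrivial A
    · simp [Subsingleton.elim (b ^ k) 0]
    · exact norm_pow_le b k
  have norm_le (k : ℕ) : ‖π (a * b ^ k) Ω‖ ≤ ‖π a‖ * ‖Ω‖ * ‖b‖ ^ k :=
    calc ‖π (a * b ^ k) Ω‖ ≤ ‖π a‖ * (‖b ^ k‖ * ‖Ω‖) := by
          rw [rep_mul_apply]
          exact (π a).le_opNorm_of_le (norm_rep_apply_le _ _)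
      _ ≤ ‖π a‖ * ‖Ω‖ * ‖b‖ ^ k := by
          rw [mul_comm ‖b ^ k‖, ← mul_assoc]
          gcongr
          exact norm_pow_le_pow k
  have norm_sq_le (k : ℕ) :
      ‖π (a * b ^ k) Ω‖ ^ 2 ≤ ‖π (a * b ^ 0) Ω‖ * ‖π (a * b ^ (2 * k)) Ω‖ := by
    simpa [two_mul, pow_add] using norm_rep_mul_sq_le (h.pow k) a
  simpa using apply_one_le_mul_apply_zero_of_sq_le (x := fun k => ‖π (a * b ^ k) Ω‖)
    (norm_nonneg b) (fun k => norm_nonneg _) norm_sq_le norm_le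

theorem norm_rep_mul_le (h : IsModularAdjoint (vectorFunctional π Ω Ω) b c) (a : A) :
    ‖π (a * b) Ω‖ ≤ √‖b * c‖ * ‖π a Ω‖ := by
  have self_adjoint := h.mul (h.symm (isHermitian_vectorFunctional_self Ω))
  refine abs_le_of_sq_le_sq' ?_ (by positivity) |>.2
  calc ‖π (a * b) Ω‖ ^ 2 ≤ ‖π a Ω‖ * ‖π (a * (b * c)) Ω‖ := norm_rep_mul_sq_le h a
    _ ≤ ‖π a Ω‖ * (‖b * c‖ * ‖π a Ω‖) := by
        gcongr
        exact norm_rep_mul_le_of_self self_adjoint a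
    _ = (√‖b * c‖ * ‖π a Ω‖) ^ 2 := by
        rw [mul_pow, Real.sq_sqrt (norm_nonneg _)]
        ring

theorem exists_right_mul (hΩ : DenseRange (orbitMap π Ω))
    (h : IsModularAdjoint (vectorFunctional π Ω Ω) b c) :
    ∃ B ∈ commutant π, B Ω = π b Ω ∧ star B Ω = π c Ω := by
  obtain ⟨B, hB, hBΩ, -⟩ := exists_mem_commutant hΩ (τ := π b Ω) (Real.sqrt_nonneg ‖b * c‖)
    fun a => by rw [← rep_mul_apply]; exact norm_rep_mul_le h a
  refine ⟨B, hB, hBΩ, hΩ.eq_of_inner_right ℂ fun x => ?_⟩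
  calc ⟪π x Ω, star B Ω⟫_ℂ = ⟪B (π x Ω), Ω⟫_ℂ := ContinuousLinearMap.adjoint_inner_right B _ _
    _ = ⟪π (x * b) Ω, π 1 Ω⟫_ℂ := by
        rw [mem_commutant_iff.1 hB, hBΩ, rep_mul_apply, map_one, one_apply_eq_self]
    _ = ⟪π x Ω, π c Ω⟫_ℂ := by rw [inner_rep_mul_left h, one_mul]

theorem inner_envVN_apply_rep (hΩ : DenseRange (orbitMap π Ω))
    (h : IsModularAdjoint (vectorFunctional π Ω Ω) b c) {m : Hs →L[ℂ] Hs} (hm : m ∈ envVN π) :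
    ⟪Ω, m (π c Ω)⟫_ℂ = ⟪π b Ω, m Ω⟫_ℂ := by
  obtain ⟨B, hB, hBΩ, hBstar⟩ := exists_right_mul hΩ h
  rw [← hBstar, apply_comm_of_mem_envVN hm (star_mem_commutant hB), ← hBΩ]
  exact ContinuousLinearMap.adjoint_inner_right B _ _

end ModularAdjoint

section SelfAdjointVectors

attribute [local instance] InnerProductSpace.complexToReal

/-- The closed real subspace of vectors approximated by `π h Ω` with `h` selfadjoint. -/
def selfAdjointVectors (π : A →⋆ₐ[ℂ] (Hs →L[ℂ] Hs)) (Ω : Hs) : Submodule ℝ Hs :=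
  ((selfAdjoint.submodule ℝ A).map
    ((orbitMap π Ω).toLinearMap.restrictScalars ℝ)).topologicalClosure

theorem coe_selfAdjointVectors :
    (selfAdjointVectors π Ω : Set Hs) = closure {x | ∃ h, star h = h ∧ π h Ω = x} := rfl

instance : (selfAdjointVectors π Ω).HasOrthogonalProjection :=
  haveI : CompleteSpace (selfAdjointVectors π Ω) :=
    (Submodule.isClosed_topologicalClosure _).completeSpace_coe
  inferInstance

theorem inner_apply_eq_of_mem_selfAdjointVectors {T : Hs →L[ℂ] Hs} (hT : T ∈ commutant π) {η : Hs}
    (hη : η ∈ selfAdjointVectors π Ω) : ⟪η, T Ω⟫_ℂ = ⟪Ω, T η⟫_ℂ := by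
  rw [← SetLike.mem_coe, coe_selfAdjointVectors] at hη
  refine closure_minimal (t := {η | ⟪η, T Ω⟫_ℂ = ⟪Ω, T η⟫_ℂ}) ?_
    (isClosed_eq (by fun_prop) (by fun_prop)) hη
  rintro _ ⟨h, hh, rfl⟩
  rw [Set.mem_ofPred_eq, mem_commutant_iff.1 hT, inner_rep_left, hh]

theorem vectorFunctional_star_of_mem_orthogonal {r : Hs} (hr : r ∈ (selfAdjointVectors π Ω)ᗮ)
    (a : A) : vectorFunctional π Ω r (star a) = -starRingEnd ℂ (vectorFunctional π Ω r a) := by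
  have re_eq_zero (h : A) (hh : star h = h) : (vectorFunctional π Ω r h).re = 0 := by
    rw [vectorFunctional_apply, inner_rep_right, hh]
    exact hr _ (subset_closure ⟨h, hh, rfl⟩)
  have re_add := re_eq_zero (a + star a) (by simp [add_comm])
  have re_I_smul_sub := re_eq_zero (Complex.I • (a - star a))
    (by rw [star_smul, star_sub, star_star, Complex.star_def, Complex.conj_I, neg_smul,
      ← smul_neg, neg_sub])
  apply Complex.ext <;> simp at re_add re_I_smul_sub ⊢ <;> linarith

section ImplementingIsometry

variable {σ : A ≃⋆ₐ[ℂ] A}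

theorem exists_implementing_isometry (hΩ : DenseRange (orbitMap π Ω))
    (hσ : ∀ a, vectorFunctional π Ω Ω (σ a) = vectorFunctional π Ω Ω a) :
    ∃ V : Hs ≃ₗᵢ[ℂ] Hs, ∀ a, V (π a Ω) = π (σ a) Ω := by
  have norm_eq (a : A) : ‖π (σ a) Ω‖ = ‖π a Ω‖ := by
    rw [← sq_eq_sq₀ (norm_nonneg _) (norm_nonneg _), ← Complex.ofReal_inj, Complex.ofReal_pow,
      Complex.ofReal_pow, ← vectorFunctional_self_star_mul_self,
      ← vectorFunctional_self_star_mul_self, ← hσ (star a * a), map_mul σ, map_star σ]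
  exact ⟨σ.toAlgEquiv.toLinearEquiv.extendOfIsometry _ _ hΩ hΩ norm_eq,
    LinearEquiv.extendOfIsometry_eq _ _ _ hΩ hΩ norm_eq⟩

variable {V : Hs ≃ₗᵢ[ℂ] Hs}

theorem vectorFunctional_implementing_apply (hV : ∀ a, V (π a Ω) = π (σ a) Ω) (x : Hs) (a : A) :
    vectorFunctional π Ω (V x) (σ a) = vectorFunctional π Ω x a := by
  rw [vectorFunctional_apply, vectorFunctional_apply, inner_rep_right, ← map_star, ← hV,
    V.inner_map_map, inner_rep_right]

theorem isFixedPt_implementing_iff (hV : ∀ a, V (π a Ω) = π (σ a) Ω)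
    (hΩ : DenseRange (orbitMap π Ω)) {x : Hs} :
    Function.IsFixedPt V x ↔
      ∀ a, vectorFunctional π Ω x (σ a) = vectorFunctional π Ω x a := by
  constructor
  · intro hx a
    rw [← vectorFunctional_implementing_apply hV x a, hx.eq]
  · intro h
    refine eq_of_vectorFunctional_eq hΩ fun a => ?_
    obtain ⟨a, rfl⟩ := EquivLike.surjective σ a
    rw [vectorFunctional_implementing_apply hV, h]

theorem mapsTo_implementing_selfAdjointVectors (hV : ∀ a, V (π a Ω) = π (σ a) Ω) :
    Set.MapsTo V (selfAdjointVectors π Ω) (selfAdjointVectors π Ω) := by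
  rw [coe_selfAdjointVectors]
  refine Set.MapsTo.closure ?_ V.continuous
  rintro _ ⟨h, hh, rfl⟩
  exact ⟨σ h, by rw [← map_star, hh], (hV h).symm⟩

end ImplementingIsometry

theorem vectorFunctional_starProjection_comp (hΩ : DenseRange (orbitMap π Ω)) {σ : A ≃⋆ₐ[ℂ] A}
    (hσ : ∀ a, vectorFunctional π Ω Ω (σ a) = vectorFunctional π Ω Ω a) {ζ : Hs}
    (hζ : ∀ a, vectorFunctional π Ω ζ (σ a) = vectorFunctional π Ω ζ a) (a : A) :
    vectorFunctional π Ω ((selfAdjointVectors π Ω).starProjection ζ) (σ a) =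
      vectorFunctional π Ω ((selfAdjointVectors π Ω).starProjection ζ) a := by
  obtain ⟨V, hV⟩ := exists_implementing_isometry hΩ hσ
  have hζ_fixed := (isFixedPt_implementing_iff hV hΩ).2 hζ
  have hproj_fixed := isFixedPt_starProjection V.isometry
    (mapsTo_implementing_selfAdjointVectors hV) hζ_fixed
  exact (isFixedPt_implementing_iff hV hΩ).1 hproj_fixed a

theorem vectorFunctional_star_of_mem_selfAdjointVectors (hΩ : DenseRange (orbitMap π Ω)) {b c : A}
    (h : IsModularAdjoint (vectorFunctional π Ω Ω) b c) {η : Hs}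
    (hη : η ∈ selfAdjointVectors π Ω) :
    vectorFunctional π Ω η (star b) = starRingEnd ℂ (vectorFunctional π Ω η (star c)) := by
  obtain ⟨B, hB, hBΩ, hBstar⟩ := exists_right_mul hΩ h
  calc vectorFunctional π Ω η (star b) = ⟪B Ω, η⟫_ℂ := by
        rw [vectorFunctional_apply, hBΩ, inner_rep_left]
    _ = ⟪Ω, star B η⟫_ℂ := (ContinuousLinearMap.adjoint_inner_right B _ _).symm
    _ = ⟪η, π c Ω⟫_ℂ := by
        rw [← hBstar, inner_apply_eq_of_mem_selfAdjointVectors (star_mem_commutant hB) hη]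
    _ = starRingEnd ℂ (vectorFunctional π Ω η (star c)) := by
        rw [vectorFunctional_apply, ← inner_rep_left, inner_conj_symm]

section KMS

variable {d : Dynamics A} {β : ℝ} {ζ : Hs}

theorem isHermitian_vectorFunctional_starProjection (hΩ : DenseRange (orbitMap π Ω))
    (hd : Dense d.analyticElements) (hφ : d.IsKMSFunctional β (vectorFunctional π Ω Ω))
    (hζ : d.IsKMSFunctional β (vectorFunctional π Ω ζ)) :
    IsHermitian (vectorFunctional π Ω ((selfAdjointVectors π Ω).starProjection ζ)) := by
  set η := (selfAdjointVectors π Ω).starProjection ζ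
  have hη : η ∈ selfAdjointVectors π Ω := Submodule.starProjection_apply_mem _ ζ
  have apply_shift {b : A} {f : ℂ → A} (hf : d.IsAnalyticExt b f) :
      vectorFunctional π Ω η (f (-(Complex.I * β))) = vectorFunctional π Ω η b := by
    rcases eq_or_ne β 0 with rfl | hβ
    · simp [hf.apply_zero]
    · exact hf.apply_eq_of_invariant (fun t => vectorFunctional_starProjection_comp hΩ
        (hφ.apply_α hd hβ t) (hζ.apply_α hd hβ t) b) _
  refine congrFun (Continuous.ext_on hd (by fun_prop)
    (Complex.continuous_conj.comp (vectorFunctional π Ω η).continuous) ?_)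
  rintro b ⟨f, hf⟩
  have := vectorFunctional_star_of_mem_selfAdjointVectors hΩ (hφ.isModularAdjoint hf) hη
  rw [star_star, apply_shift hf] at this
  simp only [this, Complex.conj_conj]

/-- The component of `ζ` orthogonal to the selfadjoint vectors gives a functional that is both
hermitian and antihermitian. -/
theorem mem_selfAdjointVectors_of_kms (hΩ : DenseRange (orbitMap π Ω))
    (hd : Dense d.analyticElements) (hφ : d.IsKMSFunctional β (vectorFunctional π Ω Ω))
    (hζ : d.IsKMSFunctional β (vectorFunctional π Ω ζ))
    (hζ_herm : IsHermitian (vectorFunctional π Ω ζ)) : ζ ∈ selfAdjointVectors π Ω := by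
  set η := (selfAdjointVectors π Ω).starProjection ζ
  have hη_herm : IsHermitian (vectorFunctional π Ω η) :=
    isHermitian_vectorFunctional_starProjection hΩ hd hφ hζ
  have sub_apply (a : A) : vectorFunctional π Ω (ζ - η) a =
      vectorFunctional π Ω ζ a - vectorFunctional π Ω η a := by
    simp only [vectorFunctional_apply, map_sub, inner_sub_right]
  have orthogonal_eq_zero : ζ - η = 0 := by
    refine eq_of_vectorFunctional_eq hΩ fun a => ?_
    have antiherm := vectorFunctional_star_of_mem_orthogonal
      ((selfAdjointVectors π Ω).sub_starProjection_mem_orthogonal ζ) a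
    have herm : vectorFunctional π Ω (ζ - η) (star a) =
        starRingEnd ℂ (vectorFunctional π Ω (ζ - η) a) := by
      rw [sub_apply, sub_apply, hζ_herm, hη_herm, map_sub]
    have conj_eq_zero := self_eq_neg.1 (herm.symm.trans antiherm)
    rw [(map_eq_zero _).1 conj_eq_zero, vectorFunctional_apply, map_zero, inner_zero_right]
  rw [sub_eq_zero.1 orthogonal_eq_zero]
  exact Submodule.starProjection_apply_mem _ ζ

end KMS

end SelfAdjointVectors

section Center

variable {d : Dynamics A} {β : ℝ} {z : Hs →L[ℂ] Hs}

theorem apply_eq_rep_apply_of_isModularAdjoint (hΩ : DenseRange (orbitMap π Ω)) {b c : A}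
    {B : Hs →L[ℂ] Hs} (hB : B ∈ commutant π) (hBstar : star B Ω = π c Ω) {ζ : Hs}
    (h : IsModularAdjoint (vectorFunctional π Ω ζ) c b) : B ζ = π b ζ := by
  refine eq_of_vectorFunctional_eq hΩ fun x => ?_
  calc vectorFunctional π Ω (B ζ) x = ⟪star B Ω, π x ζ⟫_ℂ := by
        rw [vectorFunctional_apply, ← mem_commutant_iff.1 hB]
        exact (ContinuousLinearMap.adjoint_inner_left B _ _).symm
    _ = vectorFunctional π Ω ζ (star c * x) := by
        rw [hBstar, inner_rep_rep, vectorFunctional_apply]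
    _ = vectorFunctional π Ω (π b ζ) x := by
        rw [h, vectorFunctional_apply, vectorFunctional_apply, rep_mul_apply]

theorem star_eq_self_of_isHermitian (hΩ : DenseRange (orbitMap π Ω)) (hz : z ∈ commutant π)
    (hherm : IsHermitian (vectorFunctional π Ω (z Ω))) : star z = z := by
  refine eq_of_mem_commutant hΩ (star_mem_commutant hz) hz (hΩ.eq_of_inner_right ℂ fun x => ?_)
  calc ⟪π x Ω, star z Ω⟫_ℂ = ⟪z (π x Ω), Ω⟫_ℂ := ContinuousLinearMap.adjoint_inner_right z _ _
    _ = starRingEnd ℂ (vectorFunctional π Ω (z Ω) x) := by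
        rw [mem_commutant_iff.1 hz, vectorFunctional_apply, inner_conj_symm]
    _ = ⟪π x Ω, z Ω⟫_ℂ := by rw [← hherm, vectorFunctional_apply, inner_rep_left]

theorem inner_apply_of_star_eq_self (hz : star z = z) (x y : Hs) : ⟪z x, y⟫_ℂ = ⟪x, z y⟫_ℂ := by
  conv_lhs => rw [← hz]
  exact ContinuousLinearMap.adjoint_inner_left z _ _

theorem mem_envCenter_of_kms (hΩ : DenseRange (orbitMap π Ω)) (hd : Dense d.analyticElements)
    (hφ : d.IsKMSFunctional β (vectorFunctional π Ω Ω)) (hz : z ∈ commutant π)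
    (hkms : d.IsKMSFunctional β (vectorFunctional π Ω (z Ω)))
    (hherm : IsHermitian (vectorFunctional π Ω (z Ω))) : z ∈ envCenter π := by
  refine ⟨fun T hT => ?_, Set.subset_centralizer_centralizer hz⟩
  have hzΩ := mem_selfAdjointVectors_of_kms hΩ hd hφ hkms hherm
  refine eq_of_mem_commutant hΩ (Set.mul_mem_centralizer hT hz) (Set.mul_mem_centralizer hz hT)
    (eq_of_vectorFunctional_eq hΩ (congrFun (Continuous.ext_on hd (map_continuous _)
      (map_continuous _) ?_)))
  rintro b ⟨f, hf⟩
  have hφ_adj := (hφ.isModularAdjoint hf).symm (isHermitian_vectorFunctional_self Ω)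
  obtain ⟨B, hB, hBΩ, hBstar⟩ := exists_right_mul hΩ hφ_adj
  have B_apply := apply_eq_rep_apply_of_isModularAdjoint hΩ hB hBstar (hkms.isModularAdjoint hf)
  calc ⟪Ω, π b (T (z Ω))⟫_ℂ = ⟪Ω, T (B (z Ω))⟫_ℂ := by rw [B_apply, mem_commutant_iff.1 hT]
    _ = ⟪z Ω, T (B Ω)⟫_ℂ :=
        (inner_apply_eq_of_mem_selfAdjointVectors (Set.mul_mem_centralizer hT hB) hzΩ).symm
    _ = ⟪Ω, π b (z (T Ω))⟫_ℂ := by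
        rw [inner_apply_of_star_eq_self (star_eq_self_of_isHermitian hΩ hz hherm), hBΩ,
          mem_commutant_iff.1 hT, mem_commutant_iff.1 hz]

end Center

section Dominated

variable {ρ : A → ℂ}

theorem dominated_vectorFunctional_iff : Dominated (vectorFunctional π Ω Ω) ρ ↔
    ∀ a b, ‖ρ (star a * b)‖ ≤ ‖π a Ω‖ * ‖π b Ω‖ := by
  refine forall₂_congr fun a b => ?_
  rw [vectorFunctional_self_star_mul_self, vectorFunctional_self_star_mul_self, ← mul_pow,
    ← pow_le_pow_iff_left₀ (norm_nonneg _) (by positivity) two_ne_zero]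
  norm_cast

theorem exists_vectorFunctional_eq_of_dominated (hΩ : DenseRange (orbitMap π Ω))
    (hlin : IsLinearMap ℂ ρ) (hherm : IsHermitian ρ)
    (hdom : Dominated (vectorFunctional π Ω Ω) ρ) :
    ∃ τ, ρ = vectorFunctional π Ω τ ∧ ∀ a, ‖π a τ‖ ≤ ‖π a Ω‖ := by
  rw [dominated_vectorFunctional_iff] at hdom
  have norm_le (a : A) : ‖ρ a‖ ≤ ‖Ω‖ * ‖π a Ω‖ := by simpa using hdom 1 a
  let ρ' : Hs →L[ℂ] ℂ := (hlin.mk' ρ).extendOfNorm (orbitMap π Ω).toLinearMap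
  have ρ'_rep (a : A) : ρ' (π a Ω) = ρ a := LinearMap.extendOfNorm_eq hΩ ⟨‖Ω‖, norm_le⟩ a
  let τ := (InnerProductSpace.toDual ℂ Hs).symm ρ'
  have ρ_eq (a : A) : ρ a = vectorFunctional π Ω τ a := by
    rw [← Complex.conj_conj (ρ a), ← hherm, ← ρ'_rep, ← InnerProductSpace.toDual_symm_apply,
      inner_conj_symm, ← inner_rep_right]
    rfl
  refine ⟨τ, funext ρ_eq, fun a => ?_⟩
  refine norm_le_of_denseRange_inner_le (𝕜 := ℂ) hΩ (norm_nonneg _) fun x => ?_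
  rw [orbitMap_apply, inner_rep_rep, ← vectorFunctional_apply, ← ρ_eq]
  exact hdom x a

end Dominated

section ImplementingSymmetry

variable {γ : A ≃⋆ₐ[ℂ] A} {R : Hs →L[ℂ] Hs} {ι : Type*} {l : Filter ι} {u : ι → A}

/-- Along `l` the selfadjoint unitaries `u i` asymptotically implement `γ` in norm. -/
structure ApproxImplements (l : Filter ι) (u : ι → A) (γ : A ≃⋆ₐ[ℂ] A) : Prop where
  star_eq : ∀ i, star (u i) = u i
  mul_self : ∀ i, u i * u i = 1
  tendsto : ∀ a, Tendsto (fun i => u i * a * u i) l (𝓝 (γ a))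

/-- `R` is a selfadjoint unitary of `M = π(A)''` which implements `γ` and lies in the centralizer
of the vector state of `Ω`. -/
structure IsImplementingSymmetry (π : A →⋆ₐ[ℂ] (Hs →L[ℂ] Hs)) (Ω : Hs) (γ : A ≃⋆ₐ[ℂ] A)
    (R : Hs →L[ℂ] Hs) : Prop where
  mem_envVN : R ∈ envVN π
  inner_left : ∀ x y, ⟪R x, y⟫_ℂ = ⟪x, R y⟫_ℂ
  apply_apply : ∀ x, R (R x) = x
  apply_rep : ∀ a x, R (π a x) = π (γ a) (R x)
  inner_comm : ∀ m ∈ envVN π, ⟪Ω, m (R Ω)⟫_ℂ = ⟪Ω, R (m Ω)⟫_ℂ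

namespace ApproxImplements

theorem of_dense {D : Set A} (hD : Dense D) (hu_sa : ∀ i, star (u i) = u i)
    (hu_un : ∀ i, u i * u i = 1)
    (h : ∀ a ∈ D, Tendsto (fun i => ‖u i * a * u i - γ a‖) l (𝓝 0)) :
    ApproxImplements l u γ where
  star_eq := hu_sa
  mul_self := hu_un
  tendsto := by
    have mem_unitary (i : ι) : u i ∈ unitary A :=
      Unitary.mem_iff.2 ⟨by rw [hu_sa, hu_un], by rw [hu_sa, hu_un]⟩
    have isometry_conj (i : ι) : Isometry fun a => u i * a * u i := by
      refine Isometry.of_dist_eq fun a b => ?_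
      rw [dist_eq_norm, dist_eq_norm, ← sub_mul, ← mul_sub,
        CStarRing.norm_mul_mem_unitary _ (mem_unitary i),
        CStarRing.norm_mem_unitary_mul _ (mem_unitary i)]
    have equicontinuous_conj : Equicontinuous fun i a => u i * a * u i :=
      (LipschitzWith.uniformEquicontinuous _ 1 fun i => (isometry_conj i).lipschitz).equicontinuous
    refine fun a => closure_minimal (fun a ha => ?_)
      (equicontinuous_conj.isClosed_setOfPred_tendsto (isometry_starAlgEquiv γ).continuous) (hD a)
    exact tendsto_iff_norm_sub_tendsto_zero.2 (h a ha)

theorem rep_apply_rep_apply (hu : ApproxImplements l u γ)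
    (i : ι) (x : Hs) : π (u i) (π (u i) x) = x := by
  rw [← rep_mul_apply, hu.mul_self, map_one, one_apply_eq_self]

theorem inner_rep_left (hu : ApproxImplements l u γ)
    (i : ι) (x y : Hs) : ⟪π (u i) x, y⟫_ℂ = ⟪x, π (u i) y⟫_ℂ := by
  rw [_root_.inner_rep_left, hu.star_eq]

theorem norm_rep_apply (hu : ApproxImplements l u γ) (i : ι) (x : Hs) : ‖π (u i) x‖ = ‖x‖ := by
  rw [norm_eq_sqrt_re_inner (𝕜 := ℂ), hu.inner_rep_left, hu.rep_apply_rep_apply,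
    ← norm_eq_sqrt_re_inner]

theorem tendsto_rep_apply_rep (hu : ApproxImplements l u γ)
    {x y : Hs} (hx : Tendsto (fun i => π (u i) x) l (𝓝 y)) (a : A) :
    Tendsto (fun i => π (u i) (π a x)) l (𝓝 (π (γ a) y)) := by
  refine (tendsto_rep_apply (hu.tendsto a) hx).congr fun i => ?_
  rw [rep_mul_apply, rep_mul_apply, hu.rep_apply_rep_apply]

theorem isImplementingSymmetry (hu : ApproxImplements l u γ)
    [l.NeBot] (hR : ∀ x, Tendsto (fun i => π (u i) x) l (𝓝 (R x)))
    (hcomm : ∀ i, ∀ m ∈ envVN π, ⟪Ω, m (π (u i) Ω)⟫_ℂ = ⟪Ω, π (u i) (m Ω)⟫_ℂ) :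
    IsImplementingSymmetry π Ω γ R where
  mem_envVN T hT := by
    ext x
    refine tendsto_nhds_unique ((T.continuous.tendsto _).comp (hR x))
      ((hR (T x)).congr fun i => ?_)
    exact (mem_commutant_iff.1 hT _ _).symm
  inner_left x y := tendsto_nhds_unique ((hR x).inner tendsto_const_nhds)
    ((tendsto_const_nhds.inner (hR y)).congr fun i => (hu.inner_rep_left i x y).symm)
  apply_apply x := by
    refine tendsto_nhds_unique (hR (R x)) (tendsto_iff_norm_sub_tendsto_zero.2 ?_)
    refine (tendsto_iff_norm_sub_tendsto_zero.1 (hR x)).congr fun i => ?_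
    rw [norm_sub_rev, ← hu.norm_rep_apply (π := π) i, map_sub, hu.rep_apply_rep_apply]
  apply_rep a x := tendsto_nhds_unique (hR (π a x)) (hu.tendsto_rep_apply_rep (hR x) a)
  inner_comm m hm := tendsto_nhds_unique
    (tendsto_const_nhds.inner ((m.continuous.tendsto _).comp (hR Ω)))
    ((tendsto_const_nhds.inner (hR (m Ω))).congr fun i => (hcomm i m hm).symm)

theorem exists_tendsto_rep_of_tendsto (hu : ApproxImplements l u γ)
    (hΩ : DenseRange (orbitMap π Ω)) [l.NeBot] {κ : Hs}
    (hκ : Tendsto (fun i => π (u i) Ω) l (𝓝 κ)) :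
    ∃ R : Hs →L[ℂ] Hs, ∀ x, Tendsto (fun i => π (u i) x) l (𝓝 (R x)) := by
  have norm_eq (a : A) : ‖π (γ a) κ‖ = ‖π a Ω‖ :=
    tendsto_nhds_unique (hu.tendsto_rep_apply_rep hκ a).norm
      (tendsto_const_nhds.congr fun i => (hu.norm_rep_apply i _).symm)
  let R : Hs →L[ℂ] Hs := ((orbitMap π κ).toLinearMap ∘ₗ γ.toAlgEquiv.toLinearMap).extendOfNorm
    (orbitMap π Ω).toLinearMap
  have R_rep (a : A) : R (π a Ω) = π (γ a) κ :=
    LinearMap.extendOfNorm_eq hΩ ⟨1, fun a => by rw [one_mul]; exact (norm_eq a).le⟩ a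
  have equicontinuous_rep : Equicontinuous fun i x => π (u i) x :=
    (LipschitzWith.uniformEquicontinuous _ 1 fun i =>
      (AddMonoidHomClass.isometry_of_norm (π (u i))
        (hu.norm_rep_apply i)).lipschitz).equicontinuous
  refine ⟨R, fun x => hΩ.induction_on x
    (equicontinuous_rep.isClosed_setOfPred_tendsto R.continuous) fun a => ?_⟩
  rw [orbitMap_apply, R_rep]
  exact hu.tendsto_rep_apply_rep hκ a

theorem dist_rep_apply_sq (hu : ApproxImplements l u γ)
    (i j : ι) (x : Hs) : dist (π (u i) x) (π (u j) x) ^ 2 =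
    2 * (‖x‖ ^ 2 - (vectorFunctional π x x (u i * u j)).re) := by
  rw [dist_eq_norm, norm_sub_sq (𝕜 := ℂ), hu.norm_rep_apply, hu.norm_rep_apply,
    hu.inner_rep_left, ← rep_mul_apply, ← vectorFunctional_apply, RCLike.re_to_complex]
  ring

theorem exists_tendsto_rep (hu : ApproxImplements l u γ) (hΩ : DenseRange (orbitMap π Ω)) [l.NeBot]
    (hlim : Tendsto (fun p : ι × ι => vectorFunctional π Ω Ω (u p.1 * u p.2)) (l ×ˢ l)
      (𝓝 ((‖Ω‖ : ℂ) ^ 2))) :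
    ∃ R : Hs →L[ℂ] Hs, ∀ x, Tendsto (fun i => π (u i) x) l (𝓝 (R x)) := by
  have dist_sq_tendsto :
      Tendsto (fun p : ι × ι => dist (π (u p.1) Ω) (π (u p.2) Ω) ^ 2) (l ×ˢ l) (𝓝 0) := by
    have := ((Complex.continuous_re.tendsto _).comp hlim).const_sub (‖Ω‖ ^ 2) |>.const_mul 2
    norm_cast at this
    simpa [hu.dist_rep_apply_sq] using this
  have cauchy : Cauchy (map (fun i => π (u i) Ω) l) := by
    rw [cauchy_map_iff', tendsto_uniformity_iff_dist_tendsto_zero]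
    simpa [Function.comp_def] using (Real.continuous_sqrt.tendsto _).comp dist_sq_tendsto
  obtain ⟨κ, hκ⟩ := cauchy_iff_exists_le_nhds.1 cauchy
  exact hu.exists_tendsto_rep_of_tendsto hΩ hκ

end ApproxImplements

theorem apply_comm_of_mem_envCenter {z m : Hs →L[ℂ] Hs} (hz : z ∈ envCenter π) (hm : m ∈ envVN π)
    (x : Hs) : z (m x) = m (z x) :=
  (DFunLike.congr_fun (hz.2 m hm) x).symm

namespace IsImplementingSymmetry

theorem rep_apply (hR : IsImplementingSymmetry π Ω γ R) (a : A) (x : Hs) :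
    π a (R x) = R (π (γ a) x) := by
  rw [← hR.apply_apply (π a (R x)), hR.apply_rep, hR.apply_apply]

theorem norm_apply (hR : IsImplementingSymmetry π Ω γ R) (x : Hs) : ‖R x‖ = ‖x‖ := by
  rw [norm_eq_sqrt_re_inner (𝕜 := ℂ), hR.inner_left, hR.apply_apply, ← norm_eq_sqrt_re_inner]

theorem norm_rep_apply (hR : IsImplementingSymmetry π Ω γ R) (a : A) :
    ‖π a (R Ω)‖ = ‖π a Ω‖ := by
  have inner_eq : ⟪π a (R Ω), π a (R Ω)⟫_ℂ = ⟪π a Ω, π a Ω⟫_ℂ :=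
    calc ⟪π a (R Ω), π a (R Ω)⟫_ℂ = ⟪Ω, (R * π (star a * a)) (R Ω)⟫_ℂ := by
          rw [inner_rep_rep, hR.inner_left]; rfl
      _ = ⟪Ω, R (R (π (star a * a) Ω))⟫_ℂ :=
          hR.inner_comm _ (Set.mul_mem_centralizer hR.mem_envVN (rep_mem_envVN _))
      _ = ⟪π a Ω, π a Ω⟫_ℂ := by rw [hR.apply_apply, inner_rep_rep]
  rw [norm_eq_sqrt_re_inner (𝕜 := ℂ), inner_eq, ← norm_eq_sqrt_re_inner]

variable {d : Dynamics A} {β : ℝ} {z : Hs →L[ℂ] Hs}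

theorem inner_center_comm (hR : IsImplementingSymmetry π Ω γ R) (hz : z ∈ envCenter π)
    (a : A) : vectorFunctional π Ω (z (R Ω)) a = ⟪Ω, R (z (π a Ω))⟫_ℂ := by
  rw [vectorFunctional_apply, ← apply_comm_of_mem_envCenter hz (rep_mem_envVN a)]
  exact hR.inner_comm _ (Set.mul_mem_centralizer hz.1 (rep_mem_envVN a))

theorem isHermitian_vectorFunctional (hR : IsImplementingSymmetry π Ω γ R)
    (hz : z ∈ envCenter π) (hz_star : star z = z) :
    IsHermitian (vectorFunctional π Ω (z (R Ω))) := by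
  intro a
  rw [hR.inner_center_comm hz a, inner_conj_symm, hR.inner_left,
    inner_apply_of_star_eq_self hz_star, vectorFunctional_apply, inner_rep_right, star_star]

theorem isTwistedKMS_vectorFunctional (hR : IsImplementingSymmetry π Ω γ R)
    (hΩ : DenseRange (orbitMap π Ω)) (hφ : d.IsKMSFunctional β (vectorFunctional π Ω Ω))
    (hz : z ∈ envCenter π) : d.IsTwistedKMS γ β (vectorFunctional π Ω (z (R Ω))) := by
  refine ⟨(vectorFunctional π Ω (z (R Ω))).isLinear, fun a b _ f _ hf => ?_⟩
  have h_adj : IsModularAdjoint (vectorFunctional π Ω Ω) (star b) (f (Complex.I * β)) :=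
    fun x => by rw [star_star, hφ x hf]
  have hm : R * (z * π a) ∈ envVN π :=
    Set.mul_mem_centralizer hR.mem_envVN (Set.mul_mem_centralizer hz.1 (rep_mem_envVN a))
  calc vectorFunctional π Ω (z (R Ω)) (a * f (Complex.I * β))
      = ⟪Ω, (R * (z * π a)) (π (f (Complex.I * β)) Ω)⟫_ℂ := by
        rw [hR.inner_center_comm hz, rep_mul_apply]; rfl
    _ = ⟪Ω, π b (R (z (π a Ω)))⟫_ℂ := by
        rw [inner_envVN_apply_rep hΩ h_adj hm, ← inner_rep_right]; rfl
    _ = vectorFunctional π Ω (z (R Ω)) (b * γ a) := by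
        rw [apply_comm_of_mem_envCenter hz (rep_mem_envVN a), hR.apply_rep,
          ← apply_comm_of_mem_envCenter hz hR.mem_envVN, ← rep_mul_apply, vectorFunctional_apply]

theorem dominated_vectorFunctional (hR : IsImplementingSymmetry π Ω γ R) (hz : z ∈ envCenter π)
    (hz_norm : ‖z‖ ≤ 1) : Dominated (vectorFunctional π Ω Ω) (vectorFunctional π Ω (z (R Ω))) := by
  refine dominated_vectorFunctional_iff.2 fun a b => ?_
  calc ‖vectorFunctional π Ω (z (R Ω)) (star a * b)‖ = ‖⟪π a Ω, z (π b (R Ω))⟫_ℂ‖ := by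
        rw [vectorFunctional_apply, ← inner_rep_rep,
          apply_comm_of_mem_envCenter hz (rep_mem_envVN b)]
    _ ≤ ‖π a Ω‖ * ‖z (π b (R Ω))‖ := norm_inner_le_norm _ _
    _ ≤ ‖π a Ω‖ * ‖π b Ω‖ := by
        gcongr
        rw [← hR.norm_rep_apply]
        exact z.le_of_opNorm_le_of_le hz_norm le_rfl |>.trans_eq (one_mul _)

theorem twistedKMSDom_vectorFunctional (hR : IsImplementingSymmetry π Ω γ R)
    (hΩ : DenseRange (orbitMap π Ω)) (hφ : d.IsKMSFunctional β (vectorFunctional π Ω Ω))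
    (hz : z ∈ envCenter π) (hz_star : star z = z) (hz_norm : ‖z‖ ≤ 1) :
    TwistedKMSDom d γ β (vectorFunctional π Ω Ω) (vectorFunctional π Ω (z (R Ω))) :=
  ⟨hR.isTwistedKMS_vectorFunctional hΩ hφ hz, hR.isHermitian_vectorFunctional hz hz_star,
    hR.dominated_vectorFunctional hz hz_norm⟩

end IsImplementingSymmetry

section Untwisting

variable {d : Dynamics A} {β : ℝ} {τ : Hs}

theorem tendsto_rep_grading_apply (hR : IsImplementingSymmetry π Ω γ R)
    (hu : ∀ x, Tendsto (fun i => π (u i) x) l (𝓝 (R x))) (x : Hs) :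
    Tendsto (fun i => π (γ (u i)) x) l (𝓝 (R x)) := by
  have h := (R.continuous.tendsto _).comp (hu (R x))
  rw [hR.apply_apply] at h
  refine h.congr fun i => ?_
  rw [Function.comp_apply, hR.apply_rep, hR.apply_apply]

variable [l.NeBot]

theorem vectorFunctional_symmetry_apply (hR : IsImplementingSymmetry π Ω γ R)
    (hu : ∀ x, Tendsto (fun i => π (u i) x) l (𝓝 (R x)))
    (hτ : ∀ a, vectorFunctional π Ω τ (γ a) = vectorFunctional π Ω τ a) (a : A) :
    vectorFunctional π Ω (R τ) a = ⟪Ω, R (π a τ)⟫_ℂ := by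
  have lim_grading : Tendsto (fun i => vectorFunctional π Ω τ (γ (u i) * γ a)) l
      (𝓝 (vectorFunctional π Ω (R τ) a)) := by
    rw [vectorFunctional_apply, hR.rep_apply]
    refine (tendsto_const_nhds.inner
      (tendsto_rep_grading_apply hR hu (π (γ a) τ))).congr fun i => ?_
    rw [vectorFunctional_apply, rep_mul_apply]
  refine tendsto_nhds_unique lim_grading ((tendsto_const_nhds.inner (hu (π a τ))).congr fun i => ?_)
  rw [← map_mul γ, hτ, vectorFunctional_apply, rep_mul_apply]

theorem isHermitian_vectorFunctional_symmetry (hR : IsImplementingSymmetry π Ω γ R)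
    (hu : ∀ x, Tendsto (fun i => π (u i) x) l (𝓝 (R x))) (hu_sa : ∀ i, star (u i) = u i)
    (hτ : ∀ a, vectorFunctional π Ω τ (γ a) = vectorFunctional π Ω τ a)
    (hherm : IsHermitian (vectorFunctional π Ω τ)) :
    IsHermitian (vectorFunctional π Ω (R τ)) := by
  intro a
  rw [vectorFunctional_symmetry_apply hR hu hτ a, vectorFunctional_apply]
  refine tendsto_nhds_unique
    (tendsto_const_nhds.inner (((π (star a)).continuous.tendsto _).comp (hu τ)))
    (((Complex.continuous_conj.tendsto _).comp
      (tendsto_const_nhds.inner (hu (π a τ)))).congr fun i => ?_)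
  simp only [Function.comp_apply, ← rep_mul_apply, ← vectorFunctional_apply]
  rw [← hherm, star_mul, hu_sa]

theorem isKMSFunctional_vectorFunctional_symmetry (hR : IsImplementingSymmetry π Ω γ R)
    (hu : ∀ x, Tendsto (fun i => π (u i) x) l (𝓝 (R x)))
    (hτ : ∀ a, vectorFunctional π Ω τ (γ a) = vectorFunctional π Ω τ a)
    (htwist : ∀ a {b f}, d.IsAnalyticExt b f →
      vectorFunctional π Ω τ (a * f (Complex.I * β)) = vectorFunctional π Ω τ (b * γ a)) :
    d.IsKMSFunctional β (vectorFunctional π Ω (R τ)) := by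
  intro a b f hf
  have lim_left : Tendsto (fun i => vectorFunctional π Ω τ (u i * a * f (Complex.I * β))) l
      (𝓝 (vectorFunctional π Ω (R τ) (a * f (Complex.I * β)))) := by
    rw [vectorFunctional_symmetry_apply hR hu hτ]
    refine (tendsto_const_nhds.inner (hu _)).congr fun i => ?_
    rw [mul_assoc, vectorFunctional_apply, rep_mul_apply (u i)]
  have lim_right : Tendsto (fun i => vectorFunctional π Ω τ (b * γ (u i * a))) l
      (𝓝 (vectorFunctional π Ω (R τ) (b * a))) := by
    rw [vectorFunctional_apply, rep_mul_apply, hR.rep_apply]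
    refine (tendsto_const_nhds.inner (((π b).continuous.tendsto _).comp
      (tendsto_rep_grading_apply hR hu (π (γ a) τ)))).congr fun i => ?_
    rw [vectorFunctional_apply, map_mul γ, rep_mul_apply, rep_mul_apply, Function.comp_apply]
  exact tendsto_nhds_unique lim_left (lim_right.congr fun i => (htwist (u i * a) hf).symm)

end Untwisting

section Classification

variable {d : Dynamics A} {β : ℝ} {τ : Hs}

theorem exists_mem_commutant_apply_symmetry (hR : IsImplementingSymmetry π Ω γ R)
    (hΩ : DenseRange (orbitMap π Ω)) (hτ : ∀ a, ‖π a τ‖ ≤ ‖π a Ω‖) :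
    ∃ z ∈ commutant π, z Ω = R τ ∧ ‖z‖ ≤ 1 := by
  refine exists_mem_commutant hΩ zero_le_one fun a => ?_
  calc ‖π a (R τ)‖ = ‖π (γ a) τ‖ := by rw [hR.rep_apply, hR.norm_apply]
    _ ≤ ‖π (γ a) Ω‖ := hτ (γ a)
    _ = ‖π a (R Ω)‖ := by rw [hR.rep_apply, hR.norm_apply]
    _ = 1 * ‖π a Ω‖ := by rw [hR.norm_rep_apply, one_mul]

theorem exists_mem_envCenter_of_twistedKMSDom [l.NeBot] (hR : IsImplementingSymmetry π Ω γ R)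
    (hu : ∀ x, Tendsto (fun i => π (u i) x) l (𝓝 (R x))) (hu_sa : ∀ i, star (u i) = u i)
    (hΩ : DenseRange (orbitMap π Ω)) (hd : Dense d.analyticElements)
    (hφ : d.IsKMSFunctional β (vectorFunctional π Ω Ω)) {ρ : A → ℂ}
    (hρ : TwistedKMSDom d γ β (vectorFunctional π Ω Ω) ρ) :
    ∃ z ∈ envCenter π, star z = z ∧ ‖z‖ ≤ 1 ∧ ρ = vectorFunctional π Ω (z (R Ω)) := by
  obtain ⟨⟨hlin, hkms⟩, hherm, hdom⟩ := hρ
  obtain ⟨τ, rfl, hτ⟩ := exists_vectorFunctional_eq_of_dominated hΩ hlin hherm hdom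
  have twisted : ∀ a {b f}, d.IsAnalyticExt b f →
      vectorFunctional π Ω τ (a * f (Complex.I * β)) = vectorFunctional π Ω τ (b * γ a) :=
    fun a _ _ => Dynamics.kms_condition_of_dense hd (vectorFunctional π Ω τ).continuous
      (isometry_starAlgEquiv γ).continuous hkms a
  have grading_invariant (a : A) : vectorFunctional π Ω τ (γ a) = vectorFunctional π Ω τ a := by
    simpa using (twisted a (Dynamics.isAnalyticExt_const fun t => map_one (d.α t))).symm
  obtain ⟨z, hz, hzΩ, hz_norm⟩ := exists_mem_commutant_apply_symmetry hR hΩ hτ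
  have hermitian : IsHermitian (vectorFunctional π Ω (z Ω)) :=
    hzΩ ▸ isHermitian_vectorFunctional_symmetry hR hu hu_sa grading_invariant hherm
  have kms : d.IsKMSFunctional β (vectorFunctional π Ω (z Ω)) :=
    hzΩ ▸ isKMSFunctional_vectorFunctional_symmetry hR hu grading_invariant twisted
  have central : z ∈ envCenter π := mem_envCenter_of_kms hΩ hd hφ hz kms hermitian
  refine ⟨z, central, star_eq_self_of_isHermitian hΩ hz hermitian, hz_norm, ?_⟩
  rw [apply_comm_of_mem_envCenter central hR.mem_envVN, hzΩ, hR.apply_apply]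

theorem twistedKMSDom_iff_exists_mem_envCenter [l.NeBot] (hR : IsImplementingSymmetry π Ω γ R)
    (hu : ∀ x, Tendsto (fun i => π (u i) x) l (𝓝 (R x))) (hu_sa : ∀ i, star (u i) = u i)
    (hΩ : DenseRange (orbitMap π Ω)) (hd : Dense d.analyticElements)
    (hφ : d.IsKMSFunctional β (vectorFunctional π Ω Ω)) {ρ : A → ℂ} :
    TwistedKMSDom d γ β (vectorFunctional π Ω Ω) ρ ↔
      ∃ z ∈ envCenter π, star z = z ∧ ‖z‖ ≤ 1 ∧ ρ = vectorFunctional π Ω (z (R Ω)) := by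
  refine ⟨exists_mem_envCenter_of_twistedKMSDom hR hu hu_sa hΩ hd hφ, ?_⟩
  rintro ⟨z, hz, hz_star, hz_norm, rfl⟩
  exact hR.twistedKMSDom_vectorFunctional hΩ hφ hz hz_star hz_norm

end Classification

theorem ApproxImplements.exists_isImplementingSymmetry [l.NeBot] {d : Dynamics A} {β : ℝ}
    (hu : ApproxImplements l u γ) (hu_dyn : ∀ i t, d.α t (u i) = u i)
    (hΩ : DenseRange (orbitMap π Ω)) (hφ : d.IsKMSFunctional β (vectorFunctional π Ω Ω))
    (hu_lim : Tendsto (fun p : ι × ι => vectorFunctional π Ω Ω (u p.1 * u p.2)) (l ×ˢ l)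
      (𝓝 ((‖Ω‖ : ℂ) ^ 2))) :
    ∃ R, IsImplementingSymmetry π Ω γ R ∧ ∀ x, Tendsto (fun i => π (u i) x) l (𝓝 (R x)) := by
  obtain ⟨R, hR⟩ := hu.exists_tendsto_rep hΩ hu_lim
  refine ⟨R, hu.isImplementingSymmetry hR fun i m hm => ?_, hR⟩
  rw [inner_envVN_apply_rep hΩ (hφ.isModularAdjoint_of_invariant (hu_dyn i)) hm,
    ← inner_rep_right]

theorem tendsto_vectorFunctional_mul
    (hu : ∀ x, Tendsto (fun i => π (u i) x) l (𝓝 (R x))) (a : A) :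
    Tendsto (fun i => vectorFunctional π Ω Ω (a * u i)) l (𝓝 (vectorFunctional π Ω (R Ω) a)) :=
  (tendsto_const_nhds.inner (((π a).continuous.tendsto _).comp (hu Ω))).congr fun i => by
    rw [vectorFunctional_apply, rep_mul_apply, Function.comp_apply]

end ImplementingSymmetry

theorem isKMSFunctional_of_isKMS {d : Dynamics A} {β : ℝ} (hd : Dense d.analyticElements)
    (hφ : d.IsKMS β (vectorFunctional π Ω Ω)) :
    d.IsKMSFunctional β (vectorFunctional π Ω Ω) :=
  fun a _ _ => Dynamics.kms_condition_of_dense hd (vectorFunctional π Ω Ω).continuous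
    continuous_id hφ.2 a

theorem one_mem_envCenter : (1 : Hs →L[ℂ] Hs) ∈ envCenter π :=
  ⟨Set.one_mem_centralizer, Set.one_mem_centralizer⟩

theorem twisted_functionals_of_weakly_inner_grading_general
    (d : Dynamics A) (γ : A ≃⋆ₐ[ℂ] A) (β : ℝ) (ω : A → ℂ) (hω : d.IsKMS β ω)
    (π : A →⋆ₐ[ℂ] (Hs →L[ℂ] Hs)) (Ω : Hs) (hcyc : Dense (Set.range fun a : A => π a Ω))
    (hrep : ∀ a : A, ω a = ⟪Ω, π a Ω⟫_ℂ) {ι : Type*} {l : Filter ι} [l.NeBot] (u : ι → A)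
    (hu_sa : ∀ i, star (u i) = u i) (hu_un : ∀ i, u i * u i = 1)
    (hu_dyn : ∀ i (t : ℝ), d.α t (u i) = u i)
    (hu_lim : Tendsto (fun p : ι × ι => ω (u p.1 * u p.2)) (l ×ˢ l) (𝓝 1))
    (hd : Dense d.analyticElements) {D : Set A} (hD : Dense D)
    (hD_approx : ∀ a ∈ D, Tendsto (fun i => ‖u i * a * u i - γ a‖) l (𝓝 0)) :
    ∃ (ρ : A → ℂ) (R : Hs →L[ℂ] Hs),
      (∀ a : A, Tendsto (fun i => ω (a * u i)) l (𝓝 (ρ a))) ∧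
      TwistedKMSDom d γ β ω ρ ∧
      (∀ ξ : Hs, Tendsto (fun i => π (u i) ξ) l (𝓝 (R ξ))) ∧
      (∀ a : A, ρ a = ⟪Ω, π a (R Ω)⟫_ℂ) ∧
      ∀ ρ' : A → ℂ, TwistedKMSDom d γ β ω ρ' ↔
        ∃ z : Hs →L[ℂ] Hs, z ∈ envCenter π ∧ star z = z ∧ ‖z‖ ≤ 1 ∧
          ∀ a : A, ρ' a = ⟪Ω, π a (z (R Ω))⟫_ℂ := by
  obtain rfl : ω = vectorFunctional π Ω Ω := funext hrep
  have hφ : d.IsKMSFunctional β (vectorFunctional π Ω Ω) := isKMSFunctional_of_isKMS hd hω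
  have norm_Ω : (‖Ω‖ : ℂ) ^ 2 = 1 := by
    simpa [hω.1.2.2] using (vectorFunctional_self_star_mul_self (π := π) Ω 1).symm
  have hu : ApproxImplements l u γ := .of_dense hD hu_sa hu_un hD_approx
  obtain ⟨R, hR, hlim⟩ :=
    hu.exists_isImplementingSymmetry hu_dyn hcyc hφ (norm_Ω.symm ▸ hu_lim)
  refine ⟨vectorFunctional π Ω (R Ω), R, tendsto_vectorFunctional_mul hlim, ?_, hlim,
    vectorFunctional_apply Ω (R Ω), fun ρ' => ?_⟩
  · exact hR.twistedKMSDom_vectorFunctional hcyc hφ one_mem_envCenter (star_one _)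
      ContinuousLinearMap.norm_id_le
  · simp only [twistedKMSDom_iff_exists_mem_envCenter hR hlim hu_sa hcyc hd hφ, funext_iff,
      vectorFunctional_apply]

end Representation

/-- Suppose the graded C*-dynamical system `(A, α, γ)` with `γ`-invariant
`(α, β)`-KMS state `ω` (GNS triple `(H, π, Ω)`, `M = π(A)''`) contains a sequence `u_n`
of selfadjoint unitaries, invariant under dynamics and grading, with `ω(u_n u_m) → 1`
and `‖u_n a u_n − γ(a)‖ → 0` on a dense α-invariant *-subalgebra `A₀` of entire analytic
elements. Then `ρ(a) = lim_n ω(a u_n)` exists and is a hermitian `γ`-twisted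
`(α, β)`-KMS functional dominated by `ω` (with `ρ(a) = ⟨Ω, π(a) R Ω⟩` for the strong
limit `R` of `π(u_n)`), and the family of all such functionals is exactly
`{a ↦ ρ(a z) : z = z* ∈ Z(M), ‖z‖ ≤ 1}`. -/
theorem twisted_functionals_of_weakly_inner_grading
    {A : Type*} [CStarAlgebra A]
    {Hs : Type*} [NormedAddCommGroup Hs] [InnerProductSpace ℂ Hs] [CompleteSpace Hs]
    (S : GradedDyn A) (β : ℝ) (ω : A → ℂ)
    (hω : S.toDynamics.IsKMS β ω) (hinv : ∀ a, ω (S.γ a) = ω a)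
    (π : A →⋆ₐ[ℂ] (Hs →L[ℂ] Hs)) (Ω : Hs)
    (hcyc : Dense (Set.range fun a : A => π a Ω))
    (hrep : ∀ a : A, ω a = ⟪Ω, π a Ω⟫_ℂ)
    (u : ℕ → A)
    (hu_sa : ∀ n, star (u n) = u n) (hu_un : ∀ n, u n * u n = 1)
    (hu_dyn : ∀ n (t : ℝ), S.α t (u n) = u n) (hu_γ : ∀ n, S.γ (u n) = u n)
    (hu_lim : Filter.Tendsto (fun p : ℕ × ℕ => ω (u p.1 * u p.2))
      Filter.atTop (nhds 1))
    (A₀ : Subalgebra ℂ A)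
    (hA₀_star : ∀ a ∈ A₀, star a ∈ A₀)
    (hA₀_dense : Dense (A₀ : Set A))
    (hA₀_inv : ∀ (t : ℝ), ∀ a ∈ A₀, S.α t a ∈ A₀)
    (hA₀_an : ∀ a ∈ A₀, ∃ f : ℂ → A, S.toDynamics.IsAnalyticExt a f)
    (hA₀_approx : ∀ a ∈ A₀,
      Filter.Tendsto (fun n => ‖u n * a * u n - S.γ a‖) Filter.atTop (nhds 0)) :
    ∃ (ρ : A → ℂ) (R : Hs →L[ℂ] Hs),
      (∀ a : A, Filter.Tendsto (fun n => ω (a * u n)) Filter.atTop (nhds (ρ a))) ∧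
      TwistedKMSDom S.toDynamics S.γ β ω ρ ∧
      (∀ ξ : Hs, Filter.Tendsto (fun n => π (u n) ξ) Filter.atTop (nhds (R ξ))) ∧
      (∀ a : A, ρ a = ⟪Ω, π a (R Ω)⟫_ℂ) ∧
      ∀ ρ' : A → ℂ, TwistedKMSDom S.toDynamics S.γ β ω ρ' ↔
        ∃ z : Hs →L[ℂ] Hs, z ∈ envCenter π ∧ star z = z ∧ ‖z‖ ≤ 1 ∧
          ∀ a : A, ρ' a = ⟪Ω, π a (z (R Ω))⟫_ℂ := by
  rw [← Filter.prod_atTop_atTop_eq] at hu_lim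
  exact twisted_functionals_of_weakly_inner_grading_general S.toDynamics S.γ β ω hω π Ω hcyc hrep u
    hu_sa hu_un hu_dyn hu_lim (hA₀_dense.mono hA₀_an) hA₀_dense hA₀_approx

end
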